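/- Let X be a locally connected continuum contained in the Euclidean plane ℝ². If X has the periodic point property, then X does not separate the plane, i.e., ℝ² ∖ X is connected. -/

import Mathlib

/-- A space has the fixed point property: every continuous self-map has a fixed point. -/
def HasFPP (Y : Type*) [TopologicalSpace Y] : Prop :=
  ∀ f : Y → Y, Continuous f → ∃ x, f x = x

/-- A space has the periodic point property: every continuous self-map has a periodic point. -/
def HasPPP (Y : Type*) [TopologicalSpace Y] : Prop :=
  ∀ f : Y → Y, Continuous f → ∃ x, ∃ n : ℕ, 1 ≤ n ∧ f^[n] x = x

/-- Local fixed point property: there is an open basis whose members have closures with FPP. -/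
def HasLFPP (Y : Type*) [TopologicalSpace Y] : Prop :=
  ∃ 𝓑 : Set (Set Y), TopologicalSpace.IsTopologicalBasis 𝓑 ∧
    ∀ B ∈ 𝓑, HasFPP ↥(closure B)

/-- Weak local fixed point property. -/
def HasWLFPP (Y : Type*) [TopologicalSpace Y] : Prop :=
  ∃ 𝓑 : Set (Set Y), TopologicalSpace.IsTopologicalBasis 𝓑 ∧
    ∀ B ∈ 𝓑, ∀ f : Y → Y, Continuous f → f '' closure B ⊆ B → ∃ x ∈ B, f x = x

/-- Local periodic point property. -/
def HasLPPP (Y : Type*) [TopologicalSpace Y] : Prop :=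
  ∃ 𝓑 : Set (Set Y), TopologicalSpace.IsTopologicalBasis 𝓑 ∧
    ∀ B ∈ 𝓑, HasPPP ↥(closure B)

/-- Weak local periodic point property. -/
def HasWLPPP (Y : Type*) [TopologicalSpace Y] : Prop :=
  ∃ 𝓑 : Set (Set Y), TopologicalSpace.IsTopologicalBasis 𝓑 ∧
    ∀ B ∈ 𝓑, ∀ f : Y → Y, Continuous f → f '' closure B ⊆ B →
      ∃ x ∈ B, ∃ n : ℕ, 1 ≤ n ∧ f^[n] x = x

/-- A subset is a simple closed curve if it is homeomorphic to the unit circle. -/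
def IsSimpleClosedCurve {α : Type*} [TopologicalSpace α] (S : Set α) : Prop :=
  Nonempty (↥S ≃ₜ ↥(Metric.sphere (0 : EuclideanSpace ℝ (Fin 2)) 1))

/-- Covering dimension at most `n`: every finite open cover admits an open shrinking
of order at most `n + 1`. -/
def CoveringDimLE (Y : Type*) [TopologicalSpace Y] (n : ℕ) : Prop :=
  ∀ (ι : Type) [Finite ι] (U : ι → Set Y), (∀ i, IsOpen (U i)) → (⋃ i, U i) = Set.univ →
    ∃ V : ι → Set Y, (∀ i, IsOpen (V i)) ∧ (∀ i, V i ⊆ U i) ∧ (⋃ i, V i) = Set.univ ∧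
      ∀ y : Y, {i | y ∈ V i}.ncard ≤ n + 1

/-- A dendrite: a locally connected (metric) continuum containing no simple closed curve. -/
def IsDendrite {α : Type*} [TopologicalSpace α] (D : Set α) : Prop :=
  IsCompact D ∧ IsConnected D ∧ LocallyConnectedSpace ↥D ∧ ∀ S ⊆ D, ¬ IsSimpleClosedCurve S

/-- A local dendrite: every point has a closed neighborhood which is a dendrite. -/
def IsLocalDendrite (Y : Type*) [TopologicalSpace Y] : Prop :=
  ∀ y : Y, ∃ N : Set Y, N ∈ nhds y ∧ IsClosed N ∧ IsDendrite N

/-!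
Suppose that `ℝ² \ X` has a bounded component and place a point of it at the origin of `ℂ`. The
identity of `X` then has no continuous logarithm, so some component of `exp ⁻¹' X` contains two
points with the same exponential. That component is arcwise connected; an arc between the two
points contains a shortest subarc whose ends have the same exponential, and this subarc covers a
simple closed curve in `X`. A chord argument shows that the curve winds around the origin exactly
once, up to sign. Hence `arg`, corrected by a real function which the Tietze theorem extends from
the curve to `X`, retracts `X` onto a circle, and the periodic point property passes to retracts.
But an irrational rotation of a circle has no periodic point. So every component of `ℝ² \ X` is
unbounded and meets the connected exterior of a large ball.
-/

open Set Filter Topology unitInterval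

section ChainPath
variable {Y : Type*} [PseudoMetricSpace Y]

/-- `IsChainPath ε a b f` says that the not necessarily continuous `f : ℝ → Y` runs from `f 0 = a`
to `f 1 = b` along a finite chain of connected open sets of diameter at most `ε`. -/
inductive IsChainPath (ε : ℝ) : Y → Y → (ℝ → Y) → Prop
  | single {a b : Y} {f : ℝ → Y} (W : Set Y) (isOpen : IsOpen W) (preconnected : IsPreconnected W)
      (dist_le : ∀ u ∈ W, ∀ v ∈ W, dist u v ≤ ε) (mem : ∀ t, f t ∈ W) (source : f 0 = a)
      (target : f 1 = b) : IsChainPath ε a b f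
  | trans {a b c : Y} {f g : ℝ → Y} (left : IsChainPath ε a b f) (right : IsChainPath ε b c g) :
      IsChainPath ε a c fun t => if t ≤ 1 / 2 then f (2 * t) else g (2 * t - 1)

namespace IsChainPath
variable {ε δ : ℝ} {a b : Y} {f : ℝ → Y}

theorem source (h : IsChainPath ε a b f) : f 0 = a := by
  induction h with
  | single _ _ _ _ _ h0 _ => exact h0
  | trans _ _ ihf _ => simpa using ihf

theorem target (h : IsChainPath ε a b f) : f 1 = b := by
  induction h with
  | single _ _ _ _ _ _ h1 => exact h1
  | trans _ _ _ ihg => norm_num [ihg]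

theorem eventually_dist_le (h : IsChainPath ε a b f) (t : ℝ) :
    ∀ᶠ s in 𝓝 t, dist (f s) (f t) ≤ ε := by
  induction h generalizing t with
  | single _ _ _ hW hf _ _ => exact .of_forall fun s => hW _ (hf s) _ (hf t)
  | @trans a b c f g hf hg ihf ihg =>
    have near_f : ∀ᶠ s in 𝓝 t, dist (f (2 * s)) (f (2 * t)) ≤ ε :=
      (by fun_prop : ContinuousAt (fun s : ℝ => 2 * s) t).eventually (ihf _)
    have near_g : ∀ᶠ s in 𝓝 t, dist (g (2 * s - 1)) (g (2 * t - 1)) ≤ ε :=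
      (by fun_prop : ContinuousAt (fun s : ℝ => 2 * s - 1) t).eventually (ihg _)
    rcases lt_trichotomy t (1 / 2) with ht | rfl | ht
    · filter_upwards [near_f, eventually_lt_nhds ht] with s hs hst
      simpa only [if_pos ht.le, if_pos hst.le] using hs
    · have meet : f (2 * (1 / 2)) = g (2 * (1 / 2) - 1) := by
        norm_num [hf.target, hg.source]
      filter_upwards [near_f, near_g] with s hs hs'
      rw [if_pos le_rfl]
      split_ifs
      exacts [hs, meet ▸ hs']
    · filter_upwards [near_g, eventually_gt_nhds ht] with s hs hst
      simpa only [if_neg ht.not_ge, if_neg hst.not_ge] using hs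

theorem exists_of_isPreconnected [LocallyConnectedSpace Y] {V : Set Y} (hV : IsOpen V)
    (hV' : IsPreconnected V) (hδ : 0 < δ) (ha : a ∈ V) (hb : b ∈ V) :
    ∃ f, IsChainPath δ a b f ∧ ∀ t, f t ∈ V := by
  have small_link : ∀ x ∈ V, ∃ W, IsOpen W ∧ x ∈ W ∧ W ⊆ V ∧
      ∀ y ∈ W, ∀ z ∈ W, ∃ f, IsChainPath δ y z f ∧ ∀ t, f t ∈ V := by
    intro x hx
    obtain ⟨W, hWsub, hW, hxW, hWconn⟩ := locallyConnectedSpace_iff_subsets_isOpen_isConnected.mp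
      ‹_› x (V ∩ Metric.ball x (δ / 2))
      (inter_mem (hV.mem_nhds hx) (Metric.ball_mem_nhds x (half_pos hδ)))
    refine ⟨W, hW, hxW, hWsub.trans inter_subset_left, fun y hy z hz =>
      ⟨fun t => if t ≤ 0 then y else z, ?_, ?_⟩⟩
    · refine .single W hW hWconn.isPreconnected (fun u hu v hv => ?_) ?_ (by simp) (by norm_num)
      · linarith [dist_triangle_right u v x, Metric.mem_ball.1 (hWsub hu).2,
          Metric.mem_ball.1 (hWsub hv).2]
      · exact fun t => ite_mem.2 ⟨fun _ => hy, fun _ => hz⟩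
    · exact fun t => ite_mem.2 ⟨fun _ => (hWsub hy).1, fun _ => (hWsub hz).1⟩
  refine hV'.induction₂' (fun x y => ∃ f, IsChainPath δ x y f ∧ ∀ t, f t ∈ V)
    (fun x hx => ?_) (fun x y z _ _ _ => ?_) ha hb
  · obtain ⟨W, hW, hxW, -, link⟩ := small_link x hx
    filter_upwards [mem_nhdsWithin_of_mem_nhds (hW.mem_nhds hxW)] with y hy
    exact ⟨link x hxW y hy, link y hy x hxW⟩
  · rintro ⟨f, hf, hfV⟩ ⟨g, hg, hgV⟩
    exact ⟨_, hf.trans hg, fun t => ite_mem.2 ⟨fun _ => hfV _, fun _ => hgV _⟩⟩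

theorem exists_refinement [LocallyConnectedSpace Y] (h : IsChainPath ε a b f) (hδ : 0 < δ) :
    ∃ g, IsChainPath δ a b g ∧ ∀ t, dist (f t) (g t) ≤ ε := by
  induction h with
  | @single a b f W hW hWconn hdist hf h0 h1 =>
    obtain ⟨g, hg, hgW⟩ := exists_of_isPreconnected hW hWconn hδ (h0 ▸ hf 0) (h1 ▸ hf 1)
    exact ⟨g, hg, fun t => hdist _ (hf t) _ (hgW t)⟩
  | trans _ _ ihf ihg =>
    obtain ⟨f', hf', hff'⟩ := ihf
    obtain ⟨g', hg', hgg'⟩ := ihg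
    refine ⟨_, hf'.trans hg', fun t => ?_⟩
    dsimp only
    split_ifs
    exacts [hff' _, hgg' _]

end IsChainPath

theorem exists_isChainPath_seq [LocallyConnectedSpace Y] [PreconnectedSpace Y] (a b : Y) :
    ∃ f : ℕ → ℝ → Y, ∀ n, IsChainPath ((1 / 2) ^ n) a b (f n) ∧
      ∀ t, dist (f n t) (f (n + 1) t) ≤ (1 / 2) ^ n := by
  obtain ⟨f₀, hf₀, -⟩ := IsChainPath.exists_of_isPreconnected (δ := (1 / 2) ^ 0) isOpen_univ
    isPreconnected_univ (by norm_num) (mem_univ a) (mem_univ b)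
  choose next hnext hdist using fun (n : ℕ) (f : {f : ℝ → Y // IsChainPath ((1 / 2) ^ n) a b f}) =>
    f.2.exists_refinement (δ := (1 / 2) ^ (n + 1)) (by positivity)
  let F : ∀ n : ℕ, {f : ℝ → Y // IsChainPath ((1 / 2) ^ n) a b f} :=
    fun n => Nat.rec ⟨f₀, hf₀⟩ (fun n f => ⟨next n f, hnext n f⟩) n
  exact ⟨fun n => (F n).1, fun n => ⟨(F n).2, hdist n (F n)⟩⟩

theorem joined_of_completeSpace {Y : Type*} [MetricSpace Y] [CompleteSpace Y]
    [LocallyConnectedSpace Y] [PreconnectedSpace Y] (a b : Y) : Joined a b := by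
  obtain ⟨f, hf⟩ := exists_isChainPath_seq a b
  have geometric : ∀ t n, dist (f n t) (f (n + 1) t) ≤ 1 * (1 / 2) ^ n := fun t n => by
    simpa using (hf n).2 t
  choose g hg using fun t =>
    cauchySeq_tendsto_of_complete (cauchySeq_of_le_geometric _ _ (by norm_num) (geometric t))
  have dist_limit : ∀ t n, dist (f n t) (g t) ≤ 2 * (1 / 2) ^ n := fun t n =>
    (dist_le_of_le_geometric_of_tendsto (1 / 2) 1 (by norm_num) (geometric t) (hg t) n).trans_eq
      (by ring)
  have g_continuous : Continuous g := by
    refine continuous_iff_continuousAt.2 fun t => Metric.tendsto_nhds.2 fun ε hε => ?_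
    obtain ⟨n, hn⟩ := exists_pow_lt_of_lt_one (show 0 < ε / 5 by positivity)
      (show (1 / 2 : ℝ) < 1 by norm_num)
    filter_upwards [(hf n).1.eventually_dist_le t] with s hs
    calc dist (g s) (g t) ≤ dist (g s) (f n s) + dist (f n s) (f n t) + dist (f n t) (g t) :=
          dist_triangle4 _ _ _ _
      _ ≤ 2 * (1 / 2) ^ n + (1 / 2) ^ n + 2 * (1 / 2) ^ n := by
          gcongr
          exacts [dist_comm (g s) _ ▸ dist_limit s n, dist_limit t n]
      _ < ε := by linarith
  have g_zero : g 0 = a := tendsto_nhds_unique (hg 0) <|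
    tendsto_const_nhds.congr fun n => (hf n).1.source.symm
  have g_one : g 1 = b := tendsto_nhds_unique (hg 1) <|
    tendsto_const_nhds.congr fun n => (hf n).1.target.symm
  exact ⟨⟨⟨fun t => g t, g_continuous.comp continuous_subtype_val⟩, by simp [g_zero],
    by simp [g_one]⟩⟩

end ChainPath

section LoopErasure
variable {Y : Type*} [TopologicalSpace Y] {A : C(I, Y)} {F : Set I}

/-- `IsLoopErasure A F` says that cutting the path `A` down to the closed set of times `F` removes
only loops of `A`: every time `u` lies in an interval `[s, t]` with endpoints in `F`, no point of
`F` in between, and `A s = A t`. Times `u ∈ F` are covered by `s = u` or `t = u`. -/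
structure IsLoopErasure (A : C(I, Y)) (F : Set I) : Prop where
  isClosed : IsClosed F
  exists_gap : ∀ u, ∃ s ∈ F, ∃ t ∈ F, s ≤ u ∧ u ≤ t ∧ A s = A t ∧ ∀ r ∈ F, r ≤ s ∨ t ≤ r

namespace IsLoopErasure

theorem sdiff_Ioo (hF : IsLoopErasure A F) {s t : I} (hs : s ∈ F) (ht : t ∈ F)
    (hst : A s = A t) : IsLoopErasure A (F \ Ioo s t) where
  isClosed := hF.isClosed.sdiff isOpen_Ioo
  exists_gap u := by
    by_cases hu : s ≤ u ∧ u ≤ t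
    · exact ⟨s, ⟨hs, fun h => h.1.false⟩, t, ⟨ht, fun h => h.2.false⟩, hu.1, hu.2, hst,
        fun r hr => by simpa only [mem_Ioo, not_and_or, not_lt] using hr.2⟩
    · obtain ⟨c, hc, d, hd, hcu, hud, hcd, hgap⟩ := hF.exists_gap u
      refine ⟨c, ⟨hc, fun h => hu ⟨h.1.le.trans hcu, ?_⟩⟩, d,
        ⟨hd, fun h => hu ⟨?_, hud.trans h.2.le⟩⟩, hcu, hud, hcd, fun r hr => hgap r hr.1⟩
      · exact hud.trans ((hgap t ht).resolve_left h.2.not_ge)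
      · exact ((hgap s hs).resolve_right h.1.not_ge).trans hcu

theorem sInter [T2Space Y] {c : Set (Set I)} (hc : ∀ F ∈ c, IsLoopErasure A F)
    (hchain : IsChain (· ⊆ ·) c) (hne : c.Nonempty) : IsLoopErasure A (⋂₀ c) where
  isClosed := isClosed_sInter fun F hF => (hc F hF).isClosed
  exists_gap u := by
    let gaps (F : c) : Set (I × I) := {p | p.1 ∈ F.1 ∧ p.2 ∈ F.1 ∧ p.1 ≤ u ∧ u ≤ p.2 ∧
      A p.1 = A p.2 ∧ ∀ r ∈ ⋂₀ c, r ≤ p.1 ∨ p.2 ≤ r}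
    have gaps_closed (F : c) : IsClosed (gaps F) := by
      have gap_closed (r : I) : IsClosed {p : I × I | r ≤ p.1 ∨ p.2 ≤ r} :=
        (isClosed_le (by fun_prop) (by fun_prop)).union (isClosed_le (by fun_prop) (by fun_prop))
      simp only [gaps, ofPred_and, ofPred_forall]
      exact ((hc F F.2).isClosed.preimage continuous_fst).inter <|
        ((hc F F.2).isClosed.preimage continuous_snd).inter <|
        (isClosed_le continuous_fst continuous_const).inter <|
        (isClosed_le continuous_const continuous_snd).inter <|
        (isClosed_eq (by fun_prop) (by fun_prop)).inter <|
        isClosed_biInter fun r _ => gap_closed r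
    have gaps_nonempty (F : c) : (gaps F).Nonempty := by
      obtain ⟨s, hs, t, ht, hsu, hut, hst, hgap⟩ := (hc F F.2).exists_gap u
      exact ⟨(s, t), hs, ht, hsu, hut, hst, fun r hr => hgap r (hr F F.2)⟩
    have gaps_directed : Directed (· ⊇ ·) gaps := by
      have mono {F G : c} (h : F.1 ⊆ G.1) : gaps F ⊆ gaps G := fun p hp =>
        ⟨h hp.1, h hp.2.1, hp.2.2⟩
      intro F G
      rcases hchain.total F.2 G.2 with h | h
      exacts [⟨F, subset_rfl, mono h⟩, ⟨G, mono h, subset_rfl⟩]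
    have : Nonempty c := hne.to_subtype
    obtain ⟨p, hp⟩ := IsCompact.nonempty_iInter_of_directed_nonempty_isCompact_isClosed gaps
      gaps_directed gaps_nonempty (fun F => (gaps_closed F).isCompact) gaps_closed
    rw [mem_iInter] at hp
    exact ⟨p.1, fun F hF => (hp ⟨F, hF⟩).1, p.2, fun F hF => (hp ⟨F, hF⟩).2.1,
      (hp this.some).2.2⟩

theorem exists_minimal [T2Space Y] (A : C(I, Y)) : ∃ F, Minimal (IsLoopErasure A) F := by
  refine zorn_superset {F | IsLoopErasure A F} fun c hc hchain => ?_
  rcases c.eq_empty_or_nonempty with rfl | hne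
  · exact ⟨univ, ⟨isClosed_univ, fun u => ⟨u, mem_univ u, u, mem_univ u, le_rfl, le_rfl, rfl,
      fun r _ => le_total r u⟩⟩, by simp⟩
  · exact ⟨⋂₀ c, sInter hc hchain hne, fun F => sInter_subset_of_mem⟩

end IsLoopErasure

theorem IsLoopErasure.le_or_le_of_minimal (hF : Minimal (IsLoopErasure A) F) {s t r : I}
    (hs : s ∈ F) (ht : t ∈ F) (hst : A s = A t) (hr : r ∈ F) : r ≤ s ∨ t ≤ r := by
  simpa only [mem_Ioo, not_and_or, not_lt] using
    (show r ∈ F \ Ioo s t from hF.le_of_le (hF.prop.sdiff_Ioo hs ht hst) sdiff_subset hr).2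

theorem continuous_of_forall_exists_dist_le {X Y : Type*} [PseudoMetricSpace X] [LinearOrder X]
    [PseudoMetricSpace Y] {A B : X → Y} (hA : UniformContinuous A)
    (hB : ∀ u v, u ≤ v → ∃ x y, dist x y ≤ dist u v ∧ B u = A x ∧ B v = A y) : Continuous B := by
  refine (Metric.uniformContinuous_iff.2 fun ε hε => ?_).continuous
  obtain ⟨δ, hδ, hAδ⟩ := Metric.uniformContinuous_iff.1 hA ε hε
  refine ⟨δ, hδ, fun {u v} huv => ?_⟩
  wlog hle : u ≤ v generalizing u v
  · rw [dist_comm]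
    exact this (dist_comm u v ▸ huv) (le_of_not_ge hle)
  obtain ⟨x, y, hxy, hx, hy⟩ := hB u v hle
  exact hx ▸ hy ▸ hAδ (hxy.trans_lt huv)

theorem exists_path_ordConnected_fibers {Y : Type*} [MetricSpace Y] {a b : Y} (A : Path a b) :
    ∃ B : Path a b, ∀ s r t, s ≤ r → r ≤ t → B s = B t → B r = B s := by
  obtain ⟨F, hF⟩ := IsLoopErasure.exists_minimal A.toContinuousMap
  choose l hlF r hrF hl hr hlr hgap using hF.prop.exists_gap
  change ∀ u, A (l u) = A (r u) at hlr
  have B_continuous : Continuous fun u => A (l u) := by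
    refine continuous_of_forall_exists_dist_le
      (CompactSpace.uniformContinuous_of_continuous A.continuous) fun u v huv => ?_
    rcases hgap u (l v) (hlF v) with h | h
    · refine ⟨l u, l u, by simp, rfl, ?_⟩
      rcases hgap v (l u) (hlF u) with h' | h'
      · exact congrArg A (h.antisymm h')
      · exact (hlr v).trans (congrArg A (h'.antisymm ((hl u).trans (huv.trans (hr v)))))
    · refine ⟨r u, l v, ?_, hlr u, rfl⟩
      exact Real.dist_le_of_mem_uIcc (mem_uIcc_of_le (hr u) (h.trans (hl v)))
        (mem_uIcc_of_le ((hr u).trans h) (hl v))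
  refine ⟨⟨⟨_, B_continuous⟩, ?_, ?_⟩, fun s t u hst htu hsu => ?_⟩
  · simp [nonpos_iff_eq_zero.1 (hl 0)]
  · exact (hlr 1).trans (by simp [le_one'.antisymm (hr 1)])
  · have no_return : ∀ e ∈ F, e ≤ l s ∨ r u ≤ e := fun e he =>
      IsLoopErasure.le_or_le_of_minimal hF (hlF s) (hrF u) (hsu.trans (hlr u)) he
    rcases no_return (l t) (hlF t) with h | h
    · rcases hgap t (l s) (hlF s) with h' | h'
      · exact congrArg A (h.antisymm h')
      · exact (hlr t).trans (congrArg A (h'.antisymm ((hl s).trans (hst.trans (hr t)))))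
    · have : l t = r u := ((hl t).trans (htu.trans (hr u))).antisymm h
      exact (congrArg A this).trans ((hlr u).symm.trans hsu.symm)

end LoopErasure

section Reparametrization
theorem continuous_infDist_image_Iic {Y : Type*} [PseudoMetricSpace Y] {B : I → Y}
    (hB : Continuous B) :
    Continuous fun p : I × I => Metric.infDist (B p.1) (B '' Iic p.2) := by
  have image_eq (t : I) : B '' Iic t = range fun θ : I => B (min θ t) := by
    ext y
    constructor
    · rintro ⟨s, hs, rfl⟩
      exact ⟨s, congrArg B (min_eq_left hs)⟩
    · rintro ⟨θ, rfl⟩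
      exact ⟨_, min_le_right θ t, rfl⟩
  have infDist_eq (p : I × I) : Metric.infDist (B p.1) (B '' Iic p.2) =
      sInf ((fun θ => dist (B p.1) (B (min θ p.2))) '' univ) := by
    rw [image_eq, Metric.infDist_eq_iInf, ← sInf_range, image_univ, range_comp' (dist (B p.1)),
      Subtype.range_coe, ← range_comp]
    rfl
  simp_rw [infDist_eq]
  refine isCompact_univ.continuous_sInf ?_
  simp only [Function.HasUncurry.uncurry, id]
  fun_prop

theorem image_Iic_eq_of_eq {α β : Type*} [LinearOrder α] {B : α → β} {s t : α}
    (hfib : ∀ s r t, s ≤ r → r ≤ t → B s = B t → B r = B s) (hst : s ≤ t) (h : B s = B t) :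
    B '' Iic t = B '' Iic s := by
  refine (image_subset_iff.2 fun r hr => ?_).antisymm (image_mono (Iic_subset_Iic.2 hst))
  rcases le_total r s with hrs | hsr
  exacts [⟨r, hrs, rfl⟩, ⟨s, self_mem_Iic, (hfib s r t hsr hr h).symm⟩]

variable {Y : Type*} [MetricSpace Y] {B : I → Y}

theorem infDist_image_Iic_pos {s t : I} (hB : Continuous B)
    (hfib : ∀ s r t, s ≤ r → r ≤ t → B s = B t → B r = B s) (hst : s ≤ t) (hne : B s ≠ B t) :
    0 < Metric.infDist (B t) (B '' Iic s) := by
  have closed : IsClosed (B '' Iic s) := (isClosed_Iic.isCompact.image hB).isClosed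
  refine (closed.notMem_iff_infDist_pos ⟨_, s, self_mem_Iic, rfl⟩).1 ?_
  rintro ⟨r, hrs, hr⟩
  exact hne (hr ▸ hfib r s t hrs hst hr)

theorem exists_antitone_eq_iff_eq (hB : Continuous B)
    (hfib : ∀ s r t, s ≤ r → r ≤ t → B s = B t → B r = B s) :
    ∃ m : I → ℝ, Continuous m ∧ Antitone m ∧ ∀ s t, m s = m t ↔ B s = B t := by
  let d (t : I) (r : ℝ) : ℝ := Metric.infDist (B (projIcc 0 1 zero_le_one r)) (B '' Iic t)
  have d_continuous : Continuous (Function.uncurry d) := by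
    have := (continuous_infDist_image_Iic hB).comp
      (((continuous_projIcc (h := zero_le_one)).comp continuous_snd).prodMk continuous_fst)
    exact this
  have d_continuous_right (t : I) : Continuous (d t) := d_continuous.uncurry_left t
  have d_antitone {s t : I} (hst : s ≤ t) (r : ℝ) : d t r ≤ d s r :=
    Metric.infDist_le_infDist_of_subset (image_mono (Iic_subset_Iic.2 hst))
      ⟨_, s, self_mem_Iic, rfl⟩
  -- Averaging over `r` the distance from `B r` to the part `B '' Iic t` of the path already covered
  -- gives a function of `t` which drops exactly when the path reaches a new point.
  let m (t : I) : ℝ := ∫ r in (0 : ℝ)..1, d t r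
  have m_antitone : Antitone m := fun s t hst =>
    intervalIntegral.integral_mono zero_le_one ((d_continuous_right t).intervalIntegrable _ _)
      ((d_continuous_right s).intervalIntegrable _ _) (d_antitone hst)
  have m_eq_iff {s t : I} (hst : s ≤ t) : m s = m t ↔ B s = B t := by
    refine ⟨fun h => ?_, fun h => ?_⟩
    · by_contra hne
      refine h.not_gt (intervalIntegral.integral_lt_integral_of_continuousOn_of_le_of_exists_lt
        one_pos (d_continuous_right t).continuousOn (d_continuous_right s).continuousOn
        (fun r _ => d_antitone hst r) ⟨t, t.2, ?_⟩)
      have dist_self : d t t = 0 :=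
        Metric.infDist_zero_of_mem ⟨t, self_mem_Iic, by rw [projIcc_val]⟩
      simpa only [dist_self, d, projIcc_val] using infDist_image_Iic_pos hB hfib hst hne
    · simp only [m, d, image_Iic_eq_of_eq hfib hst h]
  refine ⟨m, intervalIntegral.continuous_parametric_intervalIntegral_of_continuous'
    d_continuous 0 1, m_antitone, fun s t => ?_⟩
  rcases le_total s t with h | h
  exacts [m_eq_iff h, by rw [eq_comm, m_eq_iff h, eq_comm]]

theorem exists_surjective_eq_iff_eq (hB : Continuous B) (hne : B 0 ≠ B 1)
    (hfib : ∀ s r t, s ≤ r → r ≤ t → B s = B t → B r = B s) :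
    ∃ μ : I → I, Continuous μ ∧ Function.Surjective μ ∧ μ 0 = 0 ∧ μ 1 = 1 ∧
      ∀ s t, μ s = μ t ↔ B s = B t := by
  obtain ⟨m, hm, hanti, hmB⟩ := exists_antitone_eq_iff_eq hB hfib
  have pos : 0 < m 0 - m 1 := sub_pos.2 <|
    (hanti zero_le_one).lt_of_ne fun h => hne ((hmB 0 1).1 h.symm)
  let μ (t : I) : I := ⟨(m 0 - m t) / (m 0 - m 1),
    div_mem (sub_nonneg.2 (hanti nonneg')) pos.le (sub_le_sub_left (hanti le_one') _)⟩
  have hμ : Continuous μ := ((continuous_const.sub hm).div_const _).subtype_mk _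
  have hμ0 : μ 0 = 0 := Subtype.ext (by simp [μ])
  have hμ1 : μ 1 = 1 := Subtype.ext (by simp [μ, pos.ne'])
  refine ⟨μ, hμ, fun y => ?_, hμ0, hμ1, fun s t => ?_⟩
  · exact mem_range_of_exists_le_of_exists_ge hμ ⟨0, hμ0.trans_le nonneg'⟩
      ⟨1, le_one'.trans_eq hμ1.symm⟩
  · rw [← hmB s t, Subtype.ext_iff, div_left_inj' pos.ne', sub_right_inj]

theorem exists_injective_path_of_ordConnected_fibers {a b : Y} (hab : a ≠ b) (B : Path a b)
    (hfib : ∀ s r t, s ≤ r → r ≤ t → B s = B t → B r = B s) :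
    ∃ γ : Path a b, Function.Injective γ := by
  obtain ⟨μ, hμ, hsurj, hμ0, hμ1, hμB⟩ :=
    exists_surjective_eq_iff_eq B.continuous (by simpa using hab) hfib
  obtain ⟨ν, hν⟩ := hsurj.hasRightInverse
  have hg (t : I) : B (ν (μ t)) = B t := (hμB _ _).1 (hν (μ t))
  have g_continuous : Continuous (B ∘ ν) :=
    (hμ.isClosedMap.isQuotientMap hμ hsurj).continuous_iff.2
      (B.continuous.congr fun t => (hg t).symm)
  refine ⟨⟨⟨B ∘ ν, g_continuous⟩, ?_, ?_⟩, fun u v huv => ?_⟩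
  · exact (congrArg (B ∘ ν) hμ0).symm.trans ((hg 0).trans B.source)
  · exact (congrArg (B ∘ ν) hμ1).symm.trans ((hg 1).trans B.target)
  · obtain ⟨⟨s, rfl⟩, t, rfl⟩ := And.intro (hsurj u) (hsurj v)
    exact (hμB s t).2 ((hg s).symm.trans (huv.trans (hg t)))

end Reparametrization

section Winding
variable {E : Type*} [TopologicalSpace E]

theorem exists_continuous_exp_eq [SimplyConnectedSpace E] [LocallyPathConnectedSpace E] {g : E → ℂ}
    (hg : Continuous g) (hne : ∀ x, g x ≠ 0) :
    ∃ f : E → ℂ, Continuous f ∧ ∀ x, Complex.exp (f x) = g x := by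
  obtain ⟨x₀⟩ : Nonempty E := inferInstance
  obtain ⟨f, ⟨-, hf⟩, -⟩ := Complex.isCoveringMap_exp.existsUnique_continuousMap_lifts
    (⟨fun x => ⟨g x, hne x⟩, by fun_prop⟩ : C(E, {z : ℂ // z ≠ 0})) x₀ (Complex.log (g x₀))
    (Subtype.ext (Complex.exp_log (hne x₀)))
  exact ⟨f, f.continuous, fun x => congrArg Subtype.val (congrFun hf x)⟩

theorem exp_sub_log_exp_eq_one (z : ℂ) : Complex.exp (z - Complex.log (Complex.exp z)) = 1 := by
  rw [Complex.exp_sub, Complex.exp_log (Complex.exp_ne_zero z), div_self (Complex.exp_ne_zero z)]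

theorem sub_log_exp_eq_of_isPreconnected {f : E → ℂ} {A : Set E} (hA : IsPreconnected A)
    (hf : ContinuousOn f A) (hslit : ∀ z ∈ A, Complex.exp (f z) ∈ Complex.slitPlane) {x y : E}
    (hx : x ∈ A) (hy : y ∈ A) :
    f x - Complex.log (Complex.exp (f x)) = f y - Complex.log (Complex.exp (f y)) := by
  refine hA.constant_of_mapsTo (T := (AddSubgroup.zmultiples (2 * Real.pi * Complex.I) : Set ℂ))
    ⟨NormedSpace.discreteTopology_zmultiples _⟩
    (f := fun z => f z - Complex.log (Complex.exp (f z)))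
    (hf.sub (hf.cexp.clog hslit)) (fun z _ => ?_) hx hy
  obtain ⟨n, hn⟩ := Complex.exp_eq_one_iff.1 (exp_sub_log_exp_eq_one (f z))
  exact ⟨n, by simpa using hn.symm⟩

theorem im_lt_im_of_im_exp_neg {f : E → ℂ} {A : Set E} (hA : IsPreconnected A)
    (hf : ContinuousOn f A) (hslit : ∀ z ∈ A, Complex.exp (f z) ∈ Complex.slitPlane) {x y : E}
    (hx : x ∈ A) (hy : y ∈ A) (hx' : (Complex.exp (f x)).im < 0)
    (hy' : 0 < (Complex.exp (f y)).im) :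
    (f x).im < (f y).im := by
  have same_branch := congrArg Complex.im (sub_log_exp_eq_of_isPreconnected hA hf hslit hx hy)
  simp only [Complex.sub_im, Complex.log_im] at same_branch
  linarith [Complex.arg_neg_iff.2 hx', Complex.arg_nonneg_iff.2 hy'.le]

theorem exists_eq_zero_of_cyclic_sides [SimplyConnectedSpace E] [LocallyPathConnectedSpace E]
    {g : E → ℂ} (hg : Continuous g) {R L D U : Set E} (hR : IsPreconnected R)
    (hL : IsPreconnected L) (hD : IsPreconnected D) (hU : IsPreconnected U)
    (hgR : ∀ z ∈ R, 0 ≤ (g z).re) (hgL : ∀ z ∈ L, (g z).re ≤ 0) (hgD : ∀ z ∈ D, (g z).im < 0)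
    (hgU : ∀ z ∈ U, 0 < (g z).im) (hRD : (R ∩ D).Nonempty) (hRU : (R ∩ U).Nonempty)
    (hLD : (L ∩ D).Nonempty) (hLU : (L ∩ U).Nonempty) : ∃ z, g z = 0 := by
  by_contra! hne
  obtain ⟨f, hf, hfg⟩ := exists_continuous_exp_eq hg hne
  have hfg_neg (z : E) : Complex.exp (f z + Real.pi * Complex.I) = -g z := by
    rw [Complex.exp_add, Complex.exp_pi_mul_I, hfg, mul_neg_one]
  have hne' (z : E) : (g z).re ≠ 0 ∨ (g z).im ≠ 0 := by
    by_contra! h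
    exact hne z (Complex.ext h.1 h.2)
  obtain ⟨x, hx⟩ := id hRD
  obtain ⟨y, hy⟩ := id hRU
  -- On the way from `D` to `U`, a logarithm of `g` climbs through the right half plane but descends
  -- through the left one.
  have increase : (f x).im < (f y).im := by
    refine im_lt_im_of_im_exp_neg ((hR.union' hRD hD).union' (hRU.mono (by grind)) hU)
      hf.continuousOn (fun z hz => ?_) (.inl (.inr hx.2)) (.inr hy.2) (by grind) (by grind)
    grind [Complex.mem_slitPlane_iff]
  have decrease : (f y + Real.pi * Complex.I).im < (f x + Real.pi * Complex.I).im := by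
    refine im_lt_im_of_im_exp_neg (f := fun z => f z + Real.pi * Complex.I)
      ((hL.union' hLD hD).union' (hLU.mono (by grind)) hU)
      (hf.add continuous_const).continuousOn (fun z hz => ?_) (.inr hy.2) (.inl (.inr hx.2))
      (by simp only [hfg_neg, Complex.neg_im]; grind)
      (by simp only [hfg_neg, Complex.neg_im]; grind)
    simp only [hfg_neg, Complex.mem_slitPlane_iff, Complex.neg_re, Complex.neg_im]
    grind
  simp only [Complex.add_im] at decrease
  linarith

theorem exists_eq_add_mul_I {Γ : ℝ → ℂ} (hΓ : Continuous Γ) {P a : ℝ} (ha : a ≠ 0)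
    (hper : ∀ t, Γ (t + P) = Γ t + a * Complex.I) (h : ℝ) :
    ∃ s t, Γ t = Γ s + h * Complex.I := by
  have hP : P ≠ 0 := by
    rintro rfl
    simpa [ha] using hper 0
  have hshift (N : ℤ) (t : ℝ) : Γ (t + N * P) = Γ t + N * (a * Complex.I) := by
    simpa using AddConstMapClass.map_add_zsmul (⟨Γ, hper⟩ : AddConstMap ℝ ℂ P (a * Complex.I)) t N
  have hre : Function.Periodic (fun t => (Γ t).re) P := fun t => by simp [hper]
  obtain ⟨t₀, hmax⟩ : ∃ t₀, ∀ t, (Γ t).re ≤ (Γ t₀).re := by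
    obtain ⟨-, ⟨t₀, rfl⟩, ht₀⟩ :=
      (hre.compact_of_continuous hP (by fun_prop)).exists_isGreatest (range_nonempty _)
    exact ⟨t₀, fun t => ht₀ ⟨t, rfl⟩⟩
  obtain ⟨N, hN⟩ : ∃ N : ℤ, |h| < N * a := by
    obtain ⟨n, hn⟩ := exists_int_gt (|h| / |a|)
    rw [div_lt_iff₀ (abs_pos.2 ha)] at hn
    rcases abs_choice a with h' | h' <;> rw [h'] at hn
    exacts [⟨n, hn⟩, ⟨-n, by push_cast; linarith⟩]
  have him (t : ℝ) : (Γ (t + N * P)).im = (Γ t).im + N * a := by simp [hshift]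
  obtain ⟨x, hx⟩ := exists_eq_zero_of_cyclic_sides
    (g := fun x : ℝ × ℝ => Γ x.1 + h * Complex.I - Γ x.2) (by fun_prop)
    (R := range fun t => (t₀, t)) (L := range fun t => (t, t₀))
    (D := range fun t => (t, t + N * P)) (U := range fun t => (t + N * P, t))
    (isPreconnected_range (by fun_prop)) (isPreconnected_range (by fun_prop))
    (isPreconnected_range (by fun_prop)) (isPreconnected_range (by fun_prop))
    (forall_mem_range.2 fun t => by simpa using hmax t)
    (forall_mem_range.2 fun t => by simpa using hmax t)
    (forall_mem_range.2 fun t => by simpa [him] using (abs_lt.1 hN).2)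
    (forall_mem_range.2 fun t => by
      simpa [him, add_assoc] using neg_lt_iff_pos_add'.1 (abs_lt.1 hN).1)
    ⟨_, ⟨_, rfl⟩, t₀, rfl⟩ ⟨(t₀, t₀ - N * P), ⟨_, rfl⟩, t₀ - N * P, by simp⟩
    ⟨(t₀ - N * P, t₀), ⟨_, rfl⟩, t₀ - N * P, by simp⟩ ⟨_, ⟨_, rfl⟩, t₀, rfl⟩
  exact ⟨x.1, x.2, (sub_eq_zero.1 hx).symm⟩

theorem not_continuous_of_exp_eq_on_frontier {U : Set ℂ} (hU : Bornology.IsBounded U)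
    (h₀ : 0 ∈ interior U) {l : frontier U → ℂ} (hl : ∀ z, Complex.exp (l z) = z) :
    ¬ Continuous l := by
  intro hcont
  obtain ⟨L, hL⟩ := ContinuousMap.exists_restrict_eq isClosed_frontier ⟨l, hcont⟩
  have hexpL (z : ℂ) (hz : z ∈ frontier U) : Complex.exp (L z) = z := by
    have : L z = l ⟨z, hz⟩ := congrArg (fun f => f ⟨z, hz⟩) hL
    rw [this, hl]
  classical
  have hH : Continuous (U.piecewise (fun z => Complex.exp (L z)) id) :=
    continuous_piecewise hexpL (by fun_prop) (by fun_prop)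
  obtain ⟨R, hR₀, hR⟩ := hU.subset_ball_lt 0 0
  have houtside (z : ℂ) (hz : |z.re| = R ∨ |z.im| = R) :
      U.piecewise (fun z => Complex.exp (L z)) id z = z := by
    refine piecewise_eq_of_notMem _ _ _ fun hzU => ?_
    have := mem_ball_zero_iff.1 (hR hzU)
    grind [Complex.abs_re_le_norm, Complex.abs_im_le_norm]
  have hre (c : ℝ) : IsPreconnected {z : ℂ | z.re = c} :=
    (convex_hyperplane (IsLinearMap.mk Complex.add_re Complex.smul_re) c).isPreconnected
  have him (c : ℝ) : IsPreconnected {z : ℂ | z.im = c} :=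
    (convex_hyperplane (IsLinearMap.mk Complex.add_im Complex.smul_im) c).isPreconnected
  obtain ⟨z, hz⟩ := exists_eq_zero_of_cyclic_sides hH (hre R) (hre (-R)) (him (-R)) (him R)
    (fun z (hz : z.re = R) => by grind) (fun z (hz : z.re = -R) => by grind)
    (fun z (hz : z.im = -R) => by grind) (fun z (hz : z.im = R) => by grind)
    ⟨⟨R, -R⟩, rfl, rfl⟩ ⟨⟨R, R⟩, rfl, rfl⟩ ⟨⟨-R, -R⟩, rfl, rfl⟩ ⟨⟨-R, R⟩, rfl, rfl⟩
  by_cases hzU : z ∈ U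
  · simp [hzU, Complex.exp_ne_zero] at hz
  · simp only [hzU, not_false_eq_true, piecewise_eq_of_notMem, id] at hz
    exact hzU (hz ▸ interior_subset h₀)

end Winding

section Covering

theorem frontier_connectedComponentIn_compl_subset {E : Type*} [TopologicalSpace E]
    [LocallyConnectedSpace E] {X : Set E} (hX : IsClosed X) (p : E) :
    frontier (connectedComponentIn Xᶜ p) ⊆ X := by
  intro z hz
  by_contra hzX
  have hcomp_open (w : E) : IsOpen (connectedComponentIn Xᶜ w) :=
    hX.isOpen_compl.connectedComponentIn
  obtain ⟨y, hyz, hyp⟩ := mem_closure_iff.1 hz.1 _ (hcomp_open z) (mem_connectedComponentIn hzX)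
  refine hz.2 ?_
  rw [(hcomp_open p).interior_eq, connectedComponentIn_eq hyp, ← connectedComponentIn_eq hyz]
  exact mem_connectedComponentIn hzX

variable {E B : Type*} [TopologicalSpace E] [TopologicalSpace B] {q : E → B}

theorem locallyConnectedSpace_of_isLocalHomeomorph [LocallyConnectedSpace B]
    (hq : IsLocalHomeomorph q) : LocallyConnectedSpace E := by
  choose e hmem _ using hq
  let _ : ChartedSpace B E :=
    { atlas := univ
      chartAt := e
      mem_chart_source := hmem
      chart_mem_atlas := fun _ => mem_univ _ }
  exact ChartedSpace.locallyConnectedSpace B E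

theorem image_connectedComponent_eq_univ [LocallyConnectedSpace E] [PreconnectedSpace B]
    (hq : IsOpenMap q) (hsurj : Function.Surjective q)
    (hdeck : ∀ a b, q a = q b → ∃ T : E → E, Continuous T ∧ q ∘ T = q ∧ T a = b) (z : E) :
    q '' connectedComponent z = univ := by
  have himage_open (w : E) : IsOpen (q '' connectedComponent w) := hq _ isOpen_connectedComponent
  have hcompl_open : IsOpen (q '' connectedComponent z)ᶜ := by
    refine isOpen_iff_forall_mem_open.2 fun x hx => ?_
    obtain ⟨w, rfl⟩ := hsurj x
    refine ⟨q '' connectedComponent w, ?_, himage_open w, mem_image_of_mem q mem_connectedComponent⟩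
    rintro _ ⟨a, ha, rfl⟩ ⟨b, hb, hba⟩
    obtain ⟨T, hT, hqT, rfl⟩ := hdeck a b hba.symm
    have hTw : T w ∈ connectedComponent (T a) :=
      hT.image_connectedComponent_subset a
        (mem_image_of_mem T (connectedComponent_eq ha ▸ mem_connectedComponent))
    exact hx ⟨T w, connectedComponent_eq hb ▸ hTw, congrFun hqT w⟩
  exact IsClopen.eq_univ ⟨⟨hcompl_open⟩, himage_open z⟩
    ⟨q z, mem_image_of_mem q mem_connectedComponent⟩

theorem exists_continuous_rightInverse_of_injOn {U : Set E} (hq : IsOpenMap q) (hU : IsOpen U)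
    (hinj : InjOn q U) (himage : q '' U = univ) :
    ∃ s : B → E, Continuous s ∧ Function.RightInverse s q := by
  choose s hsU hqs using fun x => himage.ge (mem_univ x)
  refine ⟨s, continuous_def.2 fun O hO => ?_, hqs⟩
  convert hq _ (hO.inter hU)
  ext x
  constructor
  · exact fun hx => ⟨s x, ⟨hx, hsU x⟩, hqs x⟩
  · rintro ⟨w, ⟨hwO, hwU⟩, rfl⟩
    rwa [mem_preimage, hinj (hsU _) hwU (hqs _)]

end Covering

section LoopLift

variable {X : Set ℂ}

theorem isCoveringMap_restrictPreimage_exp (h₀ : 0 ∉ X) :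
    IsCoveringMap (X.restrictPreimage Complex.exp) :=
  (Complex.isCoveringMapOn_exp.mono
    (subset_compl_singleton_iff.2 h₀)).isCoveringMap_restrictPreimage

theorem exists_translation_of_exp_eq (a b : Complex.exp ⁻¹' X)
    (hab : X.restrictPreimage Complex.exp a = X.restrictPreimage Complex.exp b) :
    ∃ T : Complex.exp ⁻¹' X → Complex.exp ⁻¹' X, Continuous T ∧
      X.restrictPreimage Complex.exp ∘ T = X.restrictPreimage Complex.exp ∧ T a = b := by
  have hperiod (w : ℂ) : Complex.exp (w + (b - a)) = Complex.exp w := by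
    have hexp : Complex.exp a = Complex.exp b := congrArg Subtype.val hab
    rw [Complex.exp_add, Complex.exp_sub, hexp, div_self (Complex.exp_ne_zero _), mul_one]
  exact ⟨fun w => ⟨w + (b - a), by rw [mem_preimage, hperiod]; exact w.2⟩, by fun_prop,
    funext fun w => Subtype.ext (hperiod w), Subtype.ext (add_sub_cancel _ _)⟩

theorem exists_mem_connectedComponent_exp_eq [LocallyConnectedSpace X] (hX : IsClosed X)
    (hconn : IsConnected X) (h₀ : 0 ∉ X) (hb : Bornology.IsBounded (connectedComponentIn Xᶜ 0)) :
    ∃ z z' : Complex.exp ⁻¹' X,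
      z' ∈ connectedComponent z ∧ z ≠ z' ∧ Complex.exp z = Complex.exp z' := by
  by_contra! hcon
  let q := X.restrictPreimage Complex.exp
  have hq : IsLocalHomeomorph q := (isCoveringMap_restrictPreimage_exp h₀).isLocalHomeomorph
  have := locallyConnectedSpace_of_isLocalHomeomorph hq
  have := isPreconnected_iff_preconnectedSpace.1 hconn.isPreconnected
  have hsurj : Function.Surjective q := fun ⟨x, hx⟩ => by
    have hexp := Complex.exp_log (ne_of_mem_of_not_mem hx h₀)
    exact ⟨⟨Complex.log x, by rwa [mem_preimage, hexp]⟩, Subtype.ext hexp⟩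
  obtain ⟨x₀, hx₀⟩ := hconn.nonempty
  obtain ⟨z₀, -⟩ := hsurj ⟨x₀, hx₀⟩
  have hinj : InjOn q (connectedComponent z₀) := fun a ha b hb' hab => by
    by_contra hne
    exact hcon a b (connectedComponent_eq ha ▸ hb') hne (congrArg Subtype.val hab)
  obtain ⟨s, hs, hqs⟩ := exists_continuous_rightInverse_of_injOn hq.isOpenMap
    isOpen_connectedComponent hinj (image_connectedComponent_eq_univ hq.isOpenMap hsurj
      exists_translation_of_exp_eq z₀)
  have hfrontier := frontier_connectedComponentIn_compl_subset hX 0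
  refine not_continuous_of_exp_eq_on_frontier hb
    (mem_interior_iff_mem_nhds.2 (connectedComponentIn_mem_nhds (hX.isOpen_compl.mem_nhds h₀)))
    (l := fun z => s (inclusion hfrontier z)) (fun z => ?_) (by fun_prop)
  exact congrArg Subtype.val (hqs (inclusion hfrontier z))

theorem exists_injective_path {Y : Type*} [MetricSpace Y] [CompleteSpace Y]
    [LocallyConnectedSpace Y] {a b : Y} (hb : b ∈ connectedComponent a) (hab : a ≠ b) :
    ∃ γ : Path a b, Function.Injective γ := by
  have := (isClosed_connectedComponent (x := a)).completeSpace_coe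
  have := (isOpen_connectedComponent (x := a)).locallyConnectedSpace
  have := isPreconnected_iff_preconnectedSpace.1 (isPreconnected_connectedComponent (x := a))
  obtain ⟨A⟩ := joined_of_completeSpace (⟨a, mem_connectedComponent⟩ : connectedComponent a) ⟨b, hb⟩
  obtain ⟨B, hB⟩ := exists_path_ordConnected_fibers A
  obtain ⟨γ, hγ⟩ := exists_injective_path_of_ordConnected_fibers (by simpa using hab) B hB
  exact ⟨γ.map continuous_subtype_val, Subtype.val_injective.comp hγ⟩

theorem two_pi_le_norm_sub_of_exp_eq {z w : ℂ} (h : Complex.exp z = Complex.exp w) (hne : z ≠ w) :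
    2 * Real.pi ≤ ‖z - w‖ := by
  obtain ⟨n, rfl⟩ := Complex.exp_eq_exp_iff_exists_int.1 h
  have hn : (1 : ℝ) ≤ |(n : ℝ)| := by
    exact_mod_cast Int.one_le_abs (show n ≠ 0 by rintro rfl; simp at hne)
  simpa [abs_of_pos Real.pi_pos] using le_mul_of_one_le_left Real.two_pi_pos.le hn

theorem exists_minimal_exp_eq {γ : I → ℂ} (hγ : Continuous γ) (hinj : Function.Injective γ)
    {a b : I} (hab : a < b) (hexp : Complex.exp (γ a) = Complex.exp (γ b)) :
    ∃ a' b', a' < b' ∧ Complex.exp (γ a') = Complex.exp (γ b') ∧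
      ∀ s t, s < t → Complex.exp (γ s) = Complex.exp (γ t) → (b' - a' : ℝ) ≤ t - s := by
  let K : Set (I × I) := {x | x.1 ≤ x.2} ∩
    ({x | Complex.exp (γ x.1) = Complex.exp (γ x.2)} ∩ {x | 2 * Real.pi ≤ ‖γ x.1 - γ x.2‖})
  have hK : IsCompact K := by
    refine IsClosed.isCompact ?_
    exact (isClosed_le (by fun_prop) (by fun_prop)).inter
      ((isClosed_eq (by fun_prop) (by fun_prop)).inter (isClosed_le (by fun_prop) (by fun_prop)))
  have hmemK (s t : I) (hst : s < t) (h : Complex.exp (γ s) = Complex.exp (γ t)) : (s, t) ∈ K :=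
    ⟨hst.le, h, two_pi_le_norm_sub_of_exp_eq h (hinj.ne hst.ne)⟩
  obtain ⟨⟨a', b'⟩, ⟨hle, hexp', hnorm⟩, hmin⟩ := hK.exists_isMinOn ⟨_, hmemK a b hab hexp⟩
    (f := fun x => (x.2 - x.1 : ℝ)) (by fun_prop)
  refine ⟨a', b', lt_of_le_of_ne hle ?_, hexp', fun s t hst h => hmin (hmemK s t hst h)⟩
  rintro rfl
  simp only [mem_ofPred_eq, sub_self, norm_zero] at hnorm
  exact Real.two_pi_pos.not_ge hnorm

/-- `Γ` is the lift through `Complex.exp` of a simple closed curve in `ℂ \ {0}` which is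
parametrised by `Real.Angle` and winds `m` times around the origin. -/
structure IsSimpleLoopLift (Γ : ℝ → ℂ) (m : ℤ) : Prop where
  continuous : Continuous Γ
  add_two_pi : ∀ t, Γ (t + 2 * Real.pi) = Γ t + m * (2 * Real.pi * Complex.I)
  coe_eq_of_exp_eq : ∀ s t, Complex.exp (Γ s) = Complex.exp (Γ t) → (s : Real.Angle) = t

theorem IsSimpleLoopLift.comp_neg {Γ : ℝ → ℂ} {m : ℤ} (h : IsSimpleLoopLift Γ m) :
    IsSimpleLoopLift (fun t => Γ (-t)) (-m) where
  continuous := h.continuous.comp continuous_neg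
  add_two_pi t := by
    have := h.add_two_pi (-(t + 2 * Real.pi))
    rw [neg_add, neg_add_cancel_right] at this
    rw [this, neg_add]
    push_cast
    ring
  coe_eq_of_exp_eq s t hst := neg_injective (by simpa using h.coe_eq_of_exp_eq _ _ hst)

theorem IsSimpleLoopLift.eq_one_or_eq_neg_one {Γ : ℝ → ℂ} {m : ℤ} (h : IsSimpleLoopLift Γ m)
    (hm : m ≠ 0) : m = 1 ∨ m = -1 := by
  obtain ⟨s, t, hst⟩ := exists_eq_add_mul_I h.continuous (P := 2 * Real.pi) (a := m * (2 * Real.pi))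
    (by simp [hm, Real.pi_ne_zero]) (fun t => by rw [h.add_two_pi]; push_cast; ring) (2 * Real.pi)
  have hexp : Complex.exp (Γ t) = Complex.exp (Γ s) := by
    rw [hst]
    simpa using Complex.exp_periodic (Γ s)
  obtain ⟨k, hk⟩ := Real.Angle.angle_eq_iff_two_pi_dvd_sub.1 (h.coe_eq_of_exp_eq t s hexp)
  have hshift : Γ (s + k * (2 * Real.pi)) = Γ s + k * (m * (2 * Real.pi * Complex.I)) := by
    simpa using AddConstMapClass.map_add_zsmul
      (⟨Γ, h.add_two_pi⟩ : AddConstMap ℝ ℂ (2 * Real.pi) (m * (2 * Real.pi * Complex.I))) s k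
  have hkm : (k * m : ℂ) = 1 := by
    rw [← show t = s + k * (2 * Real.pi) by linarith, hst] at hshift
    push_cast at hshift
    refine mul_right_cancel₀ Complex.two_pi_I_ne_zero ?_
    linear_combination -hshift
  exact Int.isUnit_iff.1 (IsUnit.of_mul_eq_one_right k (by exact_mod_cast hkm))

theorem exists_isSimpleLoopLift_of_injOn {p : ℝ → ℂ} (hp : ContinuousOn p (Icc 0 1)) {m : ℤ}
    (hclosed : p 1 = p 0 + m * (2 * Real.pi * Complex.I))
    (hinj : InjOn (fun u => Complex.exp (p u)) (Ico 0 1)) :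
    ∃ Γ, IsSimpleLoopLift Γ m ∧
      ∀ t, ∃ u ∈ Icc (0 : ℝ) 1, Complex.exp (Γ t) = Complex.exp (p u) := by
  have hpi : (2 * Real.pi : ℝ) ≠ 0 := Real.two_pi_pos.ne'
  let c : ℂ := m * (2 * Real.pi * Complex.I)
  let Γ (t : ℝ) : ℂ := p (Int.fract (t / (2 * Real.pi))) + ⌊t / (2 * Real.pi)⌋ * c
  have hexp (t : ℝ) : Complex.exp (Γ t) = Complex.exp (p (Int.fract (t / (2 * Real.pi)))) :=
    Complex.exp_eq_exp_iff_exists_int.2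
      ⟨⌊t / (2 * Real.pi)⌋ * m, by simp only [Γ, c]; push_cast; ring⟩
  have hfract (t : ℝ) : Int.fract (t / (2 * Real.pi)) ∈ Ico (0 : ℝ) 1 :=
    ⟨Int.fract_nonneg _, Int.fract_lt_one _⟩
  refine ⟨Γ, ⟨?_, fun t => ?_, fun s t hst => ?_⟩,
    fun t => ⟨_, Ico_subset_Icc_self (hfract t), hexp t⟩⟩
  · have hperiodic : Continuous ((fun u : ℝ => p u - u * c) ∘ Int.fract) :=
      ContinuousOn.comp_fract'' (hp.sub (by fun_prop)) (by simp [hclosed, c])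
    have hΓ : Γ = fun t => ((fun u : ℝ => p u - u * c) ∘ Int.fract) (t / (2 * Real.pi)) +
        (t / (2 * Real.pi) : ℝ) * c := by
      funext t
      conv_rhs => rw [← Int.floor_add_fract (t / (2 * Real.pi))]
      simp only [Γ, Function.comp_apply, Int.fract_intCast_add, Int.fract_fract]
      push_cast
      ring
    rw [hΓ]
    exact (hperiodic.comp (by fun_prop)).add (by fun_prop)
  · simp only [Γ, add_div, div_self hpi, Int.fract_add_one, Int.floor_add_one]
    push_cast
    ring
  · have hfract_eq := hinj (hfract s) (hfract t) ((hexp s).symm.trans (hst.trans (hexp t)))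
    obtain ⟨k, hk⟩ := Int.fract_eq_fract.1 hfract_eq
    refine Real.Angle.angle_eq_iff_two_pi_dvd_sub.2 ⟨k, ?_⟩
    rw [← hk]
    field_simp

theorem exists_isSimpleLoopLift_of_injective {γ : I → ℂ} (hγ : Continuous γ)
    (hinj : Function.Injective γ) (hexp : Complex.exp (γ 0) = Complex.exp (γ 1)) :
    ∃ (m : ℤ) (Γ : ℝ → ℂ), m ≠ 0 ∧ IsSimpleLoopLift Γ m ∧
      ∀ t, ∃ u, Complex.exp (Γ t) = Complex.exp (γ u) := by
  obtain ⟨a, b, hab, hexp_ab, hmin⟩ := exists_minimal_exp_eq hγ hinj zero_lt_one hexp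
  obtain ⟨m, hm⟩ := Complex.exp_eq_exp_iff_exists_int.1 hexp_ab.symm
  have hm₀ : m ≠ 0 := by
    rintro rfl
    exact hab.ne' (hinj (by simpa using hm))
  let p (u : ℝ) : ℂ := γ (projIcc 0 1 zero_le_one (AffineMap.lineMap (a : ℝ) b u))
  have hp : Continuous p := by
    simp only [p, AffineMap.lineMap_apply_module']
    fun_prop
  have hproj (u : ℝ) (hu : u ∈ Ico (0 : ℝ) 1) :
      (projIcc 0 1 zero_le_one (AffineMap.lineMap (a : ℝ) b u) : ℝ) =
        AffineMap.lineMap (a : ℝ) b u :=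
    congrArg Subtype.val
      (projIcc_of_mem _ ((convex_Icc 0 1).lineMap_mem a.2 b.2 (Ico_subset_Icc_self hu)))
  have hne (s t : ℝ) (hs : s ∈ Ico (0 : ℝ) 1) (ht : t ∈ Ico (0 : ℝ) 1) (hst : s < t) :
      Complex.exp (p s) ≠ Complex.exp (p t) := fun h => by
    have hlt : (0 : ℝ) < b - a := sub_pos.2 hab
    have hline : AffineMap.lineMap (a : ℝ) b s < AffineMap.lineMap (a : ℝ) b t :=
      (lineMap_lt_lineMap_iff_of_lt' (Subtype.coe_lt_coe.2 hab)).2 hst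
    have hgap := hmin _ _ (Subtype.coe_lt_coe.1 (by rwa [hproj s hs, hproj t ht])) h
    rw [hproj s hs, hproj t ht, AffineMap.lineMap_apply_module', AffineMap.lineMap_apply_module',
      smul_eq_mul, smul_eq_mul] at hgap
    nlinarith [hs.1, ht.2]
  obtain ⟨Γ, hΓ, hΓp⟩ := exists_isSimpleLoopLift_of_injOn hp.continuousOn (m := m)
    (by simpa [p] using hm) fun s hs t ht hst => by
      rcases lt_trichotomy s t with h | h | h
      exacts [absurd hst (hne s t hs ht h), h, absurd hst.symm (hne t s ht hs h)]
  exact ⟨m, Γ, hm₀, hΓ, fun t => let ⟨u, _, hu⟩ := hΓp t; ⟨_, hu⟩⟩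

theorem exists_isSimpleLoopLift [LocallyConnectedSpace X] (hX : IsClosed X)
    (hconn : IsConnected X) (h₀ : 0 ∉ X) (hb : Bornology.IsBounded (connectedComponentIn Xᶜ 0)) :
    ∃ Γ, IsSimpleLoopLift Γ 1 ∧ ∀ t, Complex.exp (Γ t) ∈ X := by
  have := (hX.preimage Complex.continuous_exp).completeSpace_coe
  have := locallyConnectedSpace_of_isLocalHomeomorph
    (isCoveringMap_restrictPreimage_exp h₀).isLocalHomeomorph
  obtain ⟨z, z', hz', hne, hexp⟩ := exists_mem_connectedComponent_exp_eq hX hconn h₀ hb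
  obtain ⟨γ, hγ⟩ := exists_injective_path hz' hne
  obtain ⟨m, Γ, hm, hΓ, hΓγ⟩ := exists_isSimpleLoopLift_of_injective
    (continuous_subtype_val.comp γ.continuous) (Subtype.val_injective.comp hγ) (by simpa using hexp)
  have hΓX (t : ℝ) : Complex.exp (Γ t) ∈ X := by
    obtain ⟨u, hu⟩ := hΓγ t
    exact hu ▸ (γ u).2
  obtain rfl | rfl := hΓ.eq_one_or_eq_neg_one hm
  exacts [⟨Γ, hΓ, hΓX⟩, ⟨_, hΓ.comp_neg, fun t => hΓX (-t)⟩]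

end LoopLift

section Retract
variable {Y Z : Type*} [TopologicalSpace Y] [TopologicalSpace Z]

theorem HasPPP.of_leftInverse (hY : HasPPP Y) {i : Z → Y} {r : Y → Z} (hi : Continuous i)
    (hr : Continuous r) (hri : Function.LeftInverse r i) : HasPPP Z := fun f hf => by
  obtain ⟨y, n, hn, hy⟩ := hY (i ∘ f ∘ r) (by fun_prop)
  have hsemi : Function.Semiconj r (i ∘ f ∘ r) f := fun y => hri (f (r y))
  exact ⟨r y, n, hn, by rw [← (hsemi.iterate_right n) y, hy]⟩

theorem HasPPP.of_homeomorph (hY : HasPPP Y) (e : Y ≃ₜ Z) : HasPPP Z :=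
  hY.of_leftInverse e.symm.continuous e.continuous e.apply_symm_apply

theorem HasPPP.isOfFinAddOrder {G : Type*} [TopologicalSpace G] [AddLeftCancelMonoid G]
    [ContinuousAdd G] (hG : HasPPP G) (a : G) : IsOfFinAddOrder a := by
  obtain ⟨x, n, hn, hx⟩ := hG (· + a) (by fun_prop)
  rw [add_right_iterate, add_eq_left] at hx
  exact isOfFinAddOrder_iff_nsmul_eq_zero.2 ⟨n, hn, hx⟩

theorem not_hasPPP_angle : ¬ HasPPP Real.Angle := fun h => by
  have : Fact (0 < 2 * Real.pi) := ⟨Real.two_pi_pos⟩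
  refine AddCircle.not_isOfFinAddOrder_iff_forall_rat_ne_div.2 (fun q hq => ?_)
    (h.isOfFinAddOrder ((1 : ℝ) : Real.Angle))
  have hirr : Irrational (1 / (2 * Real.pi)) := by
    simpa using (irrational_pi.natCast_mul two_ne_zero).inv
  exact hirr ⟨q, hq⟩

theorem continuous_periodic_lift {f : ℝ → Y} (hf : Continuous f)
    (hper : Function.Periodic f (2 * Real.pi)) :
    Continuous (hper.lift : Real.Angle → Y) :=
  hf.quotient_liftOn' _

variable {X : Set ℂ} {Γ : ℝ → ℂ}

theorem IsSimpleLoopLift.exists_leftInverse (hΓ : IsSimpleLoopLift Γ 1) (h₀ : 0 ∉ X)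
    (hΓX : ∀ t, Complex.exp (Γ t) ∈ X) :
    ∃ (G : Real.Angle → X) (ψ : X → Real.Angle), Continuous G ∧ Continuous ψ ∧
      Function.LeftInverse ψ G := by
  have hloop : Function.Periodic (fun t => (⟨Complex.exp (Γ t), hΓX t⟩ : X)) (2 * Real.pi) :=
    fun t => Subtype.ext <| by
      simp only [hΓ.add_two_pi, Int.cast_one, one_mul, Complex.exp_periodic (Γ t)]
  have hdefect : Function.Periodic (fun t => t - (Γ t).im) (2 * Real.pi) := fun t => by
    simp [hΓ.add_two_pi]
  let G : Real.Angle → X := hloop.lift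
  have hG : Continuous G :=
    continuous_periodic_lift ((Complex.continuous_exp.comp hΓ.continuous).subtype_mk hΓX) hloop
  have hdefect_cont : Continuous (hdefect.lift : Real.Angle → ℝ) :=
    continuous_periodic_lift
      (continuous_id.sub (Complex.continuous_im.comp hΓ.continuous)) hdefect
  have hGinj : Function.Injective G := fun a b hab => by
    induction a using Real.Angle.induction_on with | h s =>
    induction b using Real.Angle.induction_on with | h t =>
    exact hΓ.coe_eq_of_exp_eq s t (congrArg Subtype.val hab)
  have : Fact (0 < 2 * Real.pi) := ⟨Real.two_pi_pos⟩
  have : CompactSpace Real.Angle := inferInstanceAs (CompactSpace (AddCircle (2 * Real.pi)))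
  obtain ⟨u, hu⟩ := ContinuousMap.exists_extension (hG.isClosedEmbedding hGinj)
    ⟨hdefect.lift, hdefect_cont⟩
  refine ⟨G, fun x => (Complex.arg x : Real.Angle) + u x, hG, ?_, fun a => ?_⟩
  · have harg : Continuous fun x : X => (Complex.arg x : Real.Angle) :=
      continuous_iff_continuousAt.2 fun x =>
        (Complex.continuousAt_arg_coe_angle (ne_of_mem_of_not_mem x.2 h₀)).comp
          continuous_subtype_val.continuousAt
    exact harg.add (Real.Angle.continuous_coe.comp u.continuous)
  · induction a using Real.Angle.induction_on with | h t =>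
    have hut : u (G t) = t - (Γ t).im := DFunLike.congr_fun hu (t : Real.Angle)
    change (Complex.arg (Complex.exp (Γ t)) : Real.Angle) + (u (G t) : Real.Angle) = t
    rw [hut, Complex.arg_exp, Real.Angle.coe_toIocMod, ← Real.Angle.coe_add, add_sub_cancel]

theorem HasPPP.not_isBounded_connectedComponentIn_compl_zero [LocallyConnectedSpace X]
    (hppp : HasPPP X) (hX : IsClosed X) (hconn : IsConnected X) (h₀ : 0 ∉ X) :
    ¬ Bornology.IsBounded (connectedComponentIn Xᶜ 0) := fun hb => by
  obtain ⟨Γ, hΓ, hΓX⟩ := exists_isSimpleLoopLift hX hconn h₀ hb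
  obtain ⟨G, ψ, hG, hψ, hψG⟩ := hΓ.exists_leftInverse h₀ hΓX
  exact not_hasPPP_angle (hppp.of_leftInverse hG hψ hψG)

theorem HasPPP.not_isBounded_connectedComponentIn_compl {E : Type*} [PseudoMetricSpace E]
    [ProperSpace E] {X : Set E} [LocallyConnectedSpace X] (hppp : HasPPP X) (e : E ≃ₜ ℂ)
    (hX : IsClosed X) (hconn : IsConnected X) {p : E} (hp : p ∉ X) :
    ¬ Bornology.IsBounded (connectedComponentIn Xᶜ p) := fun hb => by
  let φ : E ≃ₜ ℂ := e.trans (Homeomorph.subRight (e p))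
  have hφp : φ p = 0 := sub_self (e p)
  have := (φ.image X).symm.locallyConnectedSpace
  have himage_bounded : Bornology.IsBounded (φ '' connectedComponentIn Xᶜ p) :=
    (hb.isCompact_closure.image φ.continuous).isBounded.subset (image_mono subset_closure)
  refine (hppp.of_homeomorph (φ.image X)).not_isBounded_connectedComponentIn_compl_zero
    (φ.isClosed_image.2 hX) (hconn.image φ φ.continuous.continuousOn)
    (hφp ▸ φ.injective.mem_set_image.not.2 hp) ?_
  rwa [φ.image_connectedComponentIn hp, image_compl_eq φ.bijective, hφp] at himage_bounded

end Retract

section Complement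
variable {E : Type*} [NormedAddCommGroup E] [NormedSpace ℝ E]

theorem isPreconnected_compl_closedBall_zero (hE : 1 < Module.rank ℝ E) {R : ℝ} (hR : 0 ≤ R) :
    IsPreconnected (Metric.closedBall (0 : E) R)ᶜ := by
  have himage : (Metric.closedBall (0 : E) R)ᶜ =
      (fun q : ℝ × E => q.1 • q.2) '' Ioi R ×ˢ Metric.sphere 0 1 := by
    ext x
    simp only [mem_compl_iff, mem_closedBall_zero_iff, not_le, mem_image, mem_prod, mem_Ioi,
      mem_sphere_zero_iff_norm, Prod.exists]
    constructor
    · intro hx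
      have hx₀ : ‖x‖ ≠ 0 := (hR.trans_lt hx).ne'
      exact ⟨‖x‖, ‖x‖⁻¹ • x, ⟨hx, by simp [norm_smul, hx₀]⟩, smul_inv_smul₀ hx₀ x⟩
    · rintro ⟨r, y, ⟨hr, hy⟩, rfl⟩
      rwa [norm_smul, hy, mul_one, Real.norm_of_nonneg (hR.trans hr.le)]
  rw [himage]
  exact (isPreconnected_Ioi.prod (isPreconnected_sphere hE 0 1)).image _
    continuous_smul.continuousOn

theorem isConnected_compl_of_not_isBounded (hE : 1 < Module.rank ℝ E) {X : Set E}
    (hX : Bornology.IsBounded X)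
    (hunb : ∀ p ∉ X, ¬ Bornology.IsBounded (connectedComponentIn Xᶜ p)) : IsConnected Xᶜ := by
  obtain ⟨R, hR₀, hXR⟩ := hX.subset_closedBall_lt 0 0
  have hfar {p : E} (hp : p ∉ X) :
      ∃ q ∈ connectedComponentIn Xᶜ p, q ∉ Metric.closedBall 0 R :=
    not_subset.1 fun h => hunb p hp (Metric.isBounded_closedBall.subset h)
  have hcomponent {p : E} (hp : p ∉ X) :
      (Metric.closedBall 0 R)ᶜ ⊆ connectedComponentIn Xᶜ p := by
    obtain ⟨q, hqp, hqR⟩ := hfar hp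
    rw [connectedComponentIn_eq hqp]
    exact (isPreconnected_compl_closedBall_zero hE hR₀.le).subset_connectedComponentIn hqR
      (compl_subset_compl.2 hXR)
  have := rank_pos_iff_nontrivial.1 (zero_lt_one.trans hE)
  obtain ⟨q, hq⟩ := NormedSpace.exists_lt_norm ℝ E R
  have hqR : q ∉ Metric.closedBall 0 R := by simpa using hq
  exact ⟨⟨q, fun h => hqR (hXR h)⟩, isPreconnected_of_forall q fun p hp =>
    ⟨_, connectedComponentIn_subset _ p, hcomponent hp hqR, mem_connectedComponentIn hp,
      isPreconnected_connectedComponentIn⟩⟩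

end Complement

theorem stmt_3_general {E : Type*} [NormedAddCommGroup E] [NormedSpace ℝ E]
    (hE : Module.finrank ℝ E = 2) {X : Set E} (hcomp : IsCompact X) (hconn : IsConnected X)
    [LocallyConnectedSpace X] (hppp : HasPPP X) : IsConnected Xᶜ := by
  have : FiniteDimensional ℝ E := Module.finite_of_finrank_eq_succ hE
  have : ProperSpace E := FiniteDimensional.proper_real E
  have hrank : 1 < Module.rank ℝ E := by simp [← Module.finrank_eq_rank, hE]
  let e : E ≃L[ℝ] ℂ :=
    ContinuousLinearEquiv.ofFinrankEq (hE.trans Complex.finrank_real_complex.symm)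
  exact isConnected_compl_of_not_isBounded hrank hcomp.isBounded fun p hp =>
    hppp.not_isBounded_connectedComponentIn_compl e.toHomeomorph hcomp.isClosed hconn hp

/-- A locally connected plane continuum with the periodic point property does not separate
the plane: its complement is connected. -/
theorem stmt_3 (X : Set (EuclideanSpace ℝ (Fin 2)))
    (hcomp : IsCompact X) (hconn : IsConnected X)
    (hlc : LocallyConnectedSpace ↥X)
    (hppp : HasPPP ↥X) : IsConnected Xᶜ :=
  stmt_3_general finrank_euclideanSpace_fin hcomp hconn hppp
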